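/- There exists a constant C > 0 depending only on n such that, for every abstract Monge–Ampère pairing setup (W, B, 𝟙, F) as in the context together with a positivity cone W₊ and a constant D ≥ 0 as in the context, and all φ₀, φ₁, …, φₙ ∈ F satisfying φ_ref − φᵢ ∈ W₊ for every 0 ≤ i ≤ n (sup-normalization): B(φ₀ − φ_ref, φ₁, …, φₙ) ≥ B(φ₀ − φ_ref, φ_ref, …, φ_ref) − C·(D + max_{0≤i≤n} J(φᵢ)). -/

import Mathlib

open Finset

/-- Abstract Monge–Ampère pairing setup with `n = m + 1`: a symmetric multilinear
form `B` on `W^(n+1) = W^(m+2)`, a unit element `one`, and a nonempty convex set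
`F ⊆ W`, satisfying (i) normalization `B(𝟙, φ₁, …, φₙ) = 1`, (ii) integration by
parts `B(u, 𝟙, g₂, …, gₙ) = 0` for `u ∈ W₀` and `gᵢ ∈ W' = span (F ∪ {𝟙})`, and
(iii) the Cauchy–Schwarz / local Hodge index inequality
`B(u, u, φ₁, …, φ_{n-1}) ≤ 0` for `u ∈ W₀`. -/
structure MASetup (m : ℕ) (W : Type*) [AddCommGroup W] [Module ℝ W] where
  B : MultilinearMap ℝ (fun _ : Fin (m + 2) => W) ℝ
  symm : ∀ (v : Fin (m + 2) → W) (σ : Equiv.Perm (Fin (m + 2))), B (v ∘ σ) = B v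
  one : W
  F : Set W
  Fne : F.Nonempty
  Fconv : Convex ℝ F
  unital : ∀ g : Fin (m + 1) → W, (∀ i, g i ∈ F) → B (Fin.cons one g) = 1
  parts : ∀ u ∈ Submodule.span ℝ ({x | ∃ φ ∈ F, ∃ ψ ∈ F, x = φ - ψ} ∪ {one}),
      ∀ g : Fin m → W, (∀ i, g i ∈ Submodule.span ℝ (F ∪ {one})) →
        B (Fin.cons u (Fin.cons one g)) = 0
  hodge : ∀ u ∈ Submodule.span ℝ ({x | ∃ φ ∈ F, ∃ ψ ∈ F, x = φ - ψ} ∪ {one}),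
      ∀ g : Fin m → W, (∀ i, g i ∈ F) → B (Fin.cons u (Fin.cons u g)) ≤ 0

namespace MASetup

variable {m : ℕ} {W : Type*} [AddCommGroup W] [Module ℝ W]

/-- The vector with `j` copies of `φ` followed by copies of `ψ`. -/
def mixVec (φ ψ : W) (j : ℕ) {k : ℕ} : Fin k → W := fun i => if (i : ℕ) < j then φ else ψ

/-- The linear span `W₀` of the differences of elements of `F` together with `one`. -/
def W0 (S : MASetup m W) : Submodule ℝ W :=
  Submodule.span ℝ ({x | ∃ φ ∈ S.F, ∃ ψ ∈ S.F, x = φ - ψ} ∪ {S.one})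

/-- The Monge–Ampère energy
`E(φ, ψ) = (n+1)⁻¹ ∑_{j=0}^{n} B(φ-ψ, φ, …, φ, ψ, …, ψ)` with `j` copies of `φ`
and `n - j` copies of `ψ` among the last `n` arguments. -/
noncomputable def energy (S : MASetup m W) (φ ψ : W) : ℝ :=
  ((m : ℝ) + 2)⁻¹ * ∑ j ∈ Finset.range (m + 2), S.B (Fin.cons (φ - ψ) (mixVec φ ψ j))

/-- The functional `I(φ, ψ) = B(φ-ψ, ψ, …, ψ) - B(φ-ψ, φ, …, φ)`. -/
noncomputable def Ifun (S : MASetup m W) (φ ψ : W) : ℝ :=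
  S.B (Fin.cons (φ - ψ) fun _ => ψ) - S.B (Fin.cons (φ - ψ) fun _ => φ)

/-- The functional `J_ψ(φ) = B(φ-ψ, ψ, …, ψ) - E(φ, ψ)`. -/
noncomputable def Jfun (S : MASetup m W) (ψ φ : W) : ℝ :=
  S.B (Fin.cons (φ - ψ) fun _ => ψ) - S.energy φ ψ

end MASetup

namespace MASetup

variable {m : ℕ} {W : Type*} [AddCommGroup W] [Module ℝ W]

lemma sub_mem_W0 (S : MASetup m W) {φ ψ : W} (hφ : φ ∈ S.F) (hψ : ψ ∈ S.F) :
    φ - ψ ∈ S.W0 :=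
  Submodule.subset_span (Or.inl ⟨φ, hφ, ψ, hψ, rfl⟩)

lemma mixVec_mem (S : MASetup m W) {φ ψ : W} (hφ : φ ∈ S.F) (hψ : ψ ∈ S.F) (j : ℕ) {k : ℕ}
    (i : Fin k) : mixVec φ ψ j i ∈ S.F := by
  unfold mixVec
  split_ifs
  · exact hφ
  · exact hψ

/-- Hodge inequality with the repeated argument in arbitrary positions. -/
lemma hodge' (S : MASetup m W) {v : W} (hv : v ∈ S.W0) (w : Fin (m + 2) → W)
    (a b : Fin (m + 2)) (hab : a ≠ b) (ha : w a = v) (hb : w b = v)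
    (hw : ∀ i, i ≠ a → i ≠ b → w i ∈ S.F) : S.B w ≤ 0 := by
  set c := Equiv.swap 0 a b with hc
  have hc0 : c ≠ 0 := by
    intro h
    have : b = Equiv.swap 0 a 0 :=
      (Equiv.swap_apply_self 0 a b).symm.trans (congrArg (Equiv.swap 0 a) h)
    rw [Equiv.swap_apply_left] at this
    exact hab this.symm
  set σ : Equiv.Perm (Fin (m + 2)) := Equiv.swap 0 a * Equiv.swap 1 c with hσ
  have h0 : σ 0 = a := by
    rw [hσ, Equiv.Perm.mul_apply, Equiv.swap_apply_of_ne_of_ne (by simp) hc0.symm,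
      Equiv.swap_apply_left]
  have h1 : σ 1 = b := by
    rw [hσ, Equiv.Perm.mul_apply, Equiv.swap_apply_left, hc]; simp
  rw [← S.symm w σ]
  have key : w ∘ σ = Fin.cons v (Fin.cons v fun i : Fin m => w (σ i.succ.succ)) := by
    funext i
    refine Fin.cases ?_ (fun i => ?_) i
    · simp [h0, ha]
    · refine Fin.cases ?_ (fun i => ?_) i
      · simp [h1, hb]
      · simp
  rw [key]
  refine S.hodge v hv _ fun i => hw _ ?_ ?_
  · rw [← h0]; exact fun h => Fin.succ_ne_zero _ (σ.injective h)
  · rw [← h1]; intro h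
    have := σ.injective h
    simp [Fin.ext_iff] at this

lemma step_le (S : MASetup m W) {φ ψ : W} (hφ : φ ∈ S.F) (hψ : ψ ∈ S.F) (j : ℕ)
    (hj : j < m + 1) :
    S.B (Fin.cons (φ - ψ) (mixVec φ ψ (j + 1))) ≤ S.B (Fin.cons (φ - ψ) (mixVec φ ψ j)) := by
  set w : Fin (m + 2) → W := Fin.cons (φ - ψ) (mixVec φ ψ j) with hw
  set p : Fin (m + 2) := (⟨j, hj⟩ : Fin (m + 1)).succ with hp
  have e1 : Function.update w p φ = Fin.cons (φ - ψ) (mixVec φ ψ (j + 1)) := by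
    rw [hw, hp, ← Fin.cons_update]
    congr 1
    funext i
    by_cases h : i = ⟨j, hj⟩
    · subst h; simp [mixVec]
    · have h' : (i : ℕ) ≠ j := fun h2 => h (Fin.ext h2)
      rw [Function.update_of_ne h]
      have : (i : ℕ) < j ↔ (i : ℕ) < j + 1 := by omega
      simp only [mixVec, this]
  have e2 : Function.update w p ψ = w := by
    have : ψ = w p := by rw [hw, hp, Fin.cons_succ]; simp [mixVec]
    rw [this, Function.update_eq_self]
  have h := S.B.map_update_sub w p φ ψ
  rw [e1, e2] at h
  have hn : S.B (Function.update w p (φ - ψ)) ≤ 0 := by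
    have hp0 : (0 : Fin (m + 2)) ≠ p := (Fin.succ_ne_zero _).symm
    refine S.hodge' (S.sub_mem_W0 hφ hψ) _ 0 p hp0 ?_ ?_ ?_
    · rw [Function.update_of_ne hp0]; simp [hw]
    · simp
    · intro i hi0 hip
      rw [Function.update_of_ne hip]
      obtain ⟨k, rfl⟩ := Fin.exists_succ_eq.2 hi0
      simpa [hw] using S.mixVec_mem hφ hψ j k
  linarith

lemma mono_le (S : MASetup m W) {φ ψ : W} (hφ : φ ∈ S.F) (hψ : ψ ∈ S.F) (j : ℕ)
    (hj : j ≤ m + 1) :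
    S.B (Fin.cons (φ - ψ) (mixVec φ ψ j)) ≤ S.B (Fin.cons (φ - ψ) fun _ => ψ) := by
  induction j with
  | zero => exact le_of_eq (by congr 2)
  | succ k ih => exact (S.step_le hφ hψ k (by omega)).trans (ih (by omega))

lemma telescope (S : MASetup m W) (φ ψ : W) :
    ∑ j ∈ Finset.range (m + 2), S.B (Fin.cons (φ - ψ) (mixVec φ ψ j)) =
      S.B (fun _ => φ) - S.B (fun _ => ψ) := by
  have e : ∀ j ∈ Finset.range (m + 2), S.B (Fin.cons (φ - ψ) (mixVec φ ψ j)) =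
      S.B (mixVec φ ψ (j + 1)) - S.B (mixVec φ ψ j) := by
    intro j hj
    rw [Finset.mem_range] at hj
    set p : Fin (m + 2) := ⟨j, hj⟩ with hp
    have e1 : Function.update (mixVec φ ψ j) p φ = mixVec φ ψ (j + 1) := by
      funext i
      by_cases h : i = p
      · subst h; simp [mixVec, hp]
      · have h' : (i : ℕ) ≠ j := fun h2 => h (Fin.ext h2)
        rw [Function.update_of_ne h]
        have : (i : ℕ) < j ↔ (i : ℕ) < j + 1 := by omega
        simp only [mixVec, this]
    have e2 : Function.update (mixVec φ ψ j) p ψ = mixVec φ ψ j := by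
      have : ψ = (mixVec φ ψ j : Fin (m + 2) → W) p := by simp [hp, mixVec]
      conv_lhs => rw [this]
      rw [← this, Function.update_eq_self_iff]
      exact this
    have h := S.B.map_update_sub (mixVec φ ψ j) p φ ψ
    rw [e1, e2] at h
    rw [← h, ← S.symm (Function.update _ _ _) (Equiv.swap 0 p)]
    congr 1
    funext i
    simp only [Function.comp]
    refine Fin.cases ?_ (fun k => ?_) i
    · simp
    · by_cases hk : k.succ = p
      · have hkj : (k : ℕ) + 1 = j := by simpa [hp, Fin.ext_iff] using hk
        rw [hk, Equiv.swap_apply_right, ← hk]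
        have h0 : (0 : Fin (m + 2)) ≠ k.succ := (Fin.succ_ne_zero _).symm
        rw [Function.update_of_ne h0]
        have a1 : (k : ℕ) < j := by omega
        have a2 : 0 < j := by omega
        simp [mixVec, a1, a2]
      · have h' : (k : ℕ) + 1 ≠ j := fun h2 => hk (Fin.ext (by simpa [hp] using h2))
        rw [Equiv.swap_apply_of_ne_of_ne (Fin.succ_ne_zero _) hk, Function.update_of_ne hk]
        have : (k : ℕ) < j ↔ (k : ℕ) + 1 < j := by omega
        simp [mixVec, this]
  rw [Finset.sum_congr rfl e, Finset.sum_range_sub (fun j => S.B (mixVec φ ψ j))]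
  congr 2
  funext i
  simp [mixVec]

lemma tangent (S : MASetup m W) {φ ψ : W} (hφ : φ ∈ S.F) (hψ : ψ ∈ S.F) :
    S.B (fun _ => φ) - S.B (fun _ => ψ) ≤
      ((m : ℝ) + 2) * S.B (Fin.cons (φ - ψ) fun _ => ψ) := by
  rw [← S.telescope φ ψ]
  calc _ ≤ ∑ j ∈ Finset.range (m + 2), S.B (Fin.cons (φ - ψ) fun _ => ψ) :=
        Finset.sum_le_sum fun j hj => S.mono_le hφ hψ j (by
          have := Finset.mem_range.1 hj; omega)
    _ = _ := by simp

lemma Jfun_eq (S : MASetup m W) (ψ φ : W) :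
    ((m : ℝ) + 2) * S.Jfun ψ φ = ((m : ℝ) + 2) * S.B (Fin.cons (φ - ψ) fun _ => ψ) -
      (S.B (fun _ => φ) - S.B (fun _ => ψ)) := by
  have h : (m : ℝ) + 2 ≠ 0 := by positivity
  rw [Jfun, energy, S.telescope, mul_sub, mul_inv_cancel_left₀ h]

/-- `I ≤ (n+1) J`. -/
lemma Ifun_le (S : MASetup m W) {φ ψ : W} (hφ : φ ∈ S.F) (hψ : ψ ∈ S.F) :
    S.B (Fin.cons (φ - ψ) fun _ => ψ) - S.B (Fin.cons (φ - ψ) fun _ => φ) ≤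
      ((m : ℝ) + 2) * S.Jfun ψ φ := by
  rw [S.Jfun_eq, ← S.telescope φ ψ, Finset.sum_range_succ]
  have h1 : ∑ j ∈ Finset.range (m + 1), S.B (Fin.cons (φ - ψ) (mixVec φ ψ j)) ≤
      ∑ j ∈ Finset.range (m + 1), S.B (Fin.cons (φ - ψ) fun _ => ψ) :=
    Finset.sum_le_sum fun j hj => S.mono_le hφ hψ j (by
      have := Finset.mem_range.1 hj; omega)
  have h2 : (mixVec φ ψ (m + 1) : Fin (m + 1) → W) = fun _ => φ := by
    funext i; exact if_pos i.isLt
  rw [h2]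
  simp at h1
  linarith

/-- `B(·, g)` as a linear map. -/
noncomputable def Lin (S : MASetup m W) (g : Fin (m + 1) → W) : W →ₗ[ℝ] ℝ :=
  S.B.toLinearMap (Fin.cons 0 g) 0

lemma Lin_apply (S : MASetup m W) (g : Fin (m + 1) → W) (x : W) :
    S.Lin g x = S.B (Fin.cons x g) := by
  simp [Lin, Fin.update_cons_zero]

end MASetup

/-- there is `C > 0` depending only on `n = m + 1` such that for
every setup, reference `φ_ref ∈ F`, positivity cone `W₊ ⊆ W₀` (on which `B` is
nonnegative against `F`-arguments), constant `D ≥ 0` bounding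
`B(φ_ref - φ, φ_ref, …, φ_ref) ≤ D` for sup-normalized `φ ∈ F`, and all
sup-normalized `φ₀, φ₁, …, φₙ ∈ F`:
`B(φ₀-φ_ref, φ₁, …, φₙ) ≥ B(φ₀-φ_ref, φ_ref, …, φ_ref) - C (D + maxᵢ J(φᵢ))`. -/
theorem mixed_MA_lower_bound (m : ℕ) :
    ∃ C : ℝ, 0 < C ∧
      ∀ (W : Type*) [AddCommGroup W] [Module ℝ W] (S : MASetup m W),
        ∀ φref ∈ S.F,
          ∀ Wp : ConvexCone ℝ W, (Wp : Set W) ⊆ (S.W0 : Set W) →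
            (∀ u ∈ Wp, ∀ g : Fin (m + 1) → W, (∀ i, g i ∈ S.F) →
              0 ≤ S.B (Fin.cons u g)) →
          ∀ D : ℝ, 0 ≤ D →
            (∀ φ ∈ S.F, φref - φ ∈ Wp →
              S.B (Fin.cons (φref - φ) fun _ => φref) ≤ D) →
          ∀ φs : Fin (m + 2) → W, (∀ i, φs i ∈ S.F) → (∀ i, φref - φs i ∈ Wp) →
            S.B (Fin.cons (φs 0 - φref) fun _ => φref) -
                C * (D + Finset.univ.sup' Finset.univ_nonempty
                  fun i => S.Jfun φref (φs i)) ≤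
              S.B (Fin.cons (φs 0 - φref) fun i => φs i.succ) := by
  set N : ℝ := (m : ℝ) + 2 with hN
  have hNpos : 0 < N := by positivity
  have hN1 : 1 ≤ N := by
    have : (0 : ℝ) ≤ m := Nat.cast_nonneg m
    linarith
  refine ⟨N ^ (m + 2) * N, by positivity, ?_⟩
  intro W _ _ S r hr Wp hWp hpos D hD hDb φs hφ hu
  set M := Finset.univ.sup' Finset.univ_nonempty fun i => S.Jfun r (φs i) with hM
  have hMi : ∀ i, S.Jfun r (φs i) ≤ M := fun i =>
    Finset.le_sup' (fun i => S.Jfun r (φs i)) (Finset.mem_univ i)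
  have hJ0 : 0 ≤ M := by
    refine le_trans ?_ (hMi 0)
    have h1 := S.Jfun_eq r (φs 0)
    have h2 := S.tangent (hφ 0) hr
    refine nonneg_of_mul_nonneg_right (a := N) ?_ hNpos
    rw [h1]; linarith
  set ψ : W := N⁻¹ • ∑ i, φs i with hψ
  have hsumψ : ∑ i, φs i = N • ψ := by rw [hψ, smul_inv_smul₀ hNpos.ne']
  have hψF : ψ ∈ S.F := by
    rw [hψ, Finset.smul_sum]
    refine S.Fconv.sum_mem (fun _ _ => by positivity) ?_ (fun i _ => hφ i)
    simp [hN]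
    field_simp
  have hsumu : ∑ i, (r - φs i) = N • (r - ψ) := by
    rw [Finset.sum_sub_distrib, hsumψ, smul_sub]
    congr 1
    rw [Finset.sum_const, Finset.card_univ, Fintype.card_fin, ← Nat.cast_smul_eq_nsmul ℝ]
    simp [hN]
  have hψu : r - ψ ∈ Wp := by
    have h1 : ∑ i, (r - φs i) ∈ Wp := by
      have : ∀ s : Finset (Fin (m + 2)), s.Nonempty → ∑ i ∈ s, (r - φs i) ∈ Wp := by
        intro s hs
        induction hs using Finset.Nonempty.cons_induction with
        | singleton a => simpa using hu a
        | cons a s ha _ ih => rw [Finset.sum_cons]; exact Wp.add_mem (hu a) ih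
      exact this _ Finset.univ_nonempty
    rw [hsumu] at h1
    have := Wp.smul_mem (inv_pos.2 hNpos) h1
    rwa [inv_smul_smul₀ hNpos.ne'] at this
  -- convexity of J
  have hJψ : S.Jfun r ψ ≤ M := by
    have e1 : ∑ i, S.B (Fin.cons (φs i - ψ) fun _ => ψ) = 0 := by
      simp_rw [← S.Lin_apply]
      rw [← map_sum, Finset.sum_sub_distrib, hsumψ]
      rw [Finset.sum_const, Finset.card_univ, Fintype.card_fin, ← Nat.cast_smul_eq_nsmul ℝ]
      simp [hN]
    have e2 : ∑ i, S.B (Fin.cons (φs i - r) fun _ => r) =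
        N * S.B (Fin.cons (ψ - r) fun _ => r) := by
      simp_rw [← S.Lin_apply]
      rw [← map_sum, ← smul_eq_mul, ← map_smul]
      congr 1
      have := congrArg Neg.neg hsumu
      rw [← Finset.sum_neg_distrib, ← smul_neg] at this
      simpa using this
    have e3 : ∑ i, S.B (fun _ => φs i) ≤ N * S.B (fun _ => ψ) := by
      have h : ∑ i, (S.B (fun _ => φs i) - S.B (fun _ => ψ)) ≤
          ∑ i, N * S.B (Fin.cons (φs i - ψ) fun _ => ψ) :=
        Finset.sum_le_sum fun i _ => S.tangent (hφ i) hψF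
      rw [← Finset.mul_sum, e1, Finset.sum_sub_distrib] at h
      simp at h
      linarith
    have e4 : ∑ i, N * S.Jfun r (φs i) ≤ ∑ i : Fin (m + 2), N * M :=
      Finset.sum_le_sum fun i _ => mul_le_mul_of_nonneg_left (hMi i) hNpos.le
    have e5 : ∑ i, N * S.Jfun r (φs i) = N * (N * S.B (Fin.cons (ψ - r) fun _ => r)) -
        (∑ i, S.B (fun _ => φs i) - N * S.B (fun _ => r)) := by
      rw [Finset.sum_congr rfl fun i _ => S.Jfun_eq r (φs i), Finset.sum_sub_distrib,
        Finset.sum_sub_distrib, ← Finset.mul_sum, e2]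
      simp [hN]
    have e6 : ∑ i : Fin (m + 2), N * M = N * (N * M) := by simp [hN]
    have e7 := S.Jfun_eq r ψ
    rw [← hN] at e7
    have e8 : N * (N * S.Jfun r ψ) ≤ N * (N * M) := by
      rw [e7]
      rw [← e6]
      refine le_trans ?_ e4
      rw [e5]
      linarith
    exact le_of_mul_le_mul_left (le_of_mul_le_mul_left e8 hNpos) hNpos
  have hneg : ∀ (x y : W) (g : Fin (m + 1) → W),
      S.B (Fin.cons (x - y) g) = - S.B (Fin.cons (y - x) g) := by
    intro x y g
    rw [← S.Lin_apply, ← S.Lin_apply, ← map_neg, neg_sub]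
  have hmain : S.B (Fin.cons (r - ψ) fun _ => ψ) ≤ D + N * M := by
    have h1 := S.Ifun_le hψF hr
    rw [hneg, hneg ψ r, ← hN] at h1
    have h2 := hDb ψ hψF hψu
    have h3 := mul_le_mul_of_nonneg_left hJψ hNpos.le
    linarith
  -- polarization
  have hpol : S.B (Fin.cons (r - φs 0) fun i => φs i.succ) ≤
      N ^ (m + 2) * S.B (Fin.cons (r - ψ) fun _ => ψ) := by
    let g : Fin (m + 2) → Fin (m + 2) → W := fun i j =>
      (Fin.cons (r - φs j) (fun _ => φs j) : Fin (m + 2) → W) i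
    have h1 := S.B.map_sum g
    have h2 : (fun i => ∑ j, g i j) =
        fun i => N • (Fin.cons (r - ψ) (fun _ => ψ) : Fin (m + 2) → W) i := by
      funext i
      refine Fin.cases ?_ (fun k => ?_) i
      · simpa [g] using hsumu
      · simpa [g] using hsumψ
    rw [h2, S.B.map_smul_univ (fun _ => N)] at h1
    simp only [Finset.prod_const, Finset.card_univ, Fintype.card_fin, smul_eq_mul] at h1
    rw [h1]
    have h3 : ∀ f : Fin (m + 2) → Fin (m + 2), (fun i => g i (f i)) =
        Fin.cons (r - φs (f 0)) fun i => φs (f i.succ) := by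
      intro f
      funext i
      refine Fin.cases ?_ (fun k => ?_) i <;> simp [g]
    simp_rw [h3]
    exact Finset.single_le_sum
      (f := fun f : Fin (m + 2) → Fin (m + 2) =>
        S.B (Fin.cons (r - φs (f 0)) fun i => φs (f i.succ)))
      (fun f _ => hpos _ (hu _) _ fun i => hφ _) (Finset.mem_univ id)
  have h0 : 0 ≤ S.B (Fin.cons (r - φs 0) fun _ => r) := hpos _ (hu 0) _ fun _ => hr
  rw [hneg, hneg (φs 0) r]
  have hfin : N ^ (m + 2) * S.B (Fin.cons (r - ψ) fun _ => ψ) ≤ N ^ (m + 2) * N * (D + M) := by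
    rw [mul_assoc]
    refine mul_le_mul_of_nonneg_left (hmain.trans ?_) (by positivity)
    nlinarith
  linarith
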